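/- For every n-braid β, the Lawrence–Krammer matrices K(β) and K(β^rev) have the same characteristic polynomial. -/

import Mathlib

open Matrix

noncomputable section

/-- Braid relations among the Artin generators `σ_1, …, σ_{n-1}`
(indexed here by `Fin (n-1)`, with `i : Fin (n-1)` standing for `σ_{i+1}`). -/
def braidRels (n : ℕ) : Set (FreeGroup (Fin (n - 1))) :=
  {r | (∃ i j : Fin (n - 1), (i : ℕ) + 1 = (j : ℕ) ∧
          r = .of i * .of j * .of i * (.of j * .of i * .of j)⁻¹) ∨
       (∃ i j : Fin (n - 1), (i : ℕ) + 2 ≤ (j : ℕ) ∧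
          r = .of i * .of j * (.of j * .of i)⁻¹)}

/-- The braid group `B_n` as a presented group. -/
abbrev Braid (n : ℕ) := PresentedGroup (braidRels n)

/-- The Artin generator `σ_{i+1}` of `B_n`. -/
def σg {n : ℕ} (i : Fin (n - 1)) : Braid n := PresentedGroup.of i

/-- Index set `{(i,j) : 1 ≤ i < j ≤ n}` for the Lawrence–Krammer basis `X_{i,j}`. -/
abbrev BP (n : ℕ) := {p : Fin (n + 1) × Fin (n + 1) // 0 < (p.1 : ℕ) ∧ (p.1 : ℕ) < (p.2 : ℕ)}

/-- The standard basis row vector `X_{a,b}`. -/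
def ee {R : Type*} [CommRing R] (n a b : ℕ) : BP n → R :=
  fun c => if (c.val.1 : ℕ) = a ∧ (c.val.2 : ℕ) = b then 1 else 0

/-- The Lawrence–Krammer matrix of the Artin generator `σ_m` (1-based `m`),
with parameters `t`, `q`; row `(i,j)` is the expansion of `X_{i,j}·σ_m` in the basis. -/
def LKgen {R : Type*} [CommRing R] (t q : R) (n m : ℕ) : Matrix (BP n) (BP n) R :=
  fun r c =>
    let i := (r.val.1 : ℕ); let j := (r.val.2 : ℕ)
    if m = i ∧ j = i + 1 then -(t * q ^ 2) * ee n i j c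
    else if m = i then
      q * ee n (i + 1) j c + (1 - q) * ee n i j c + t * q * (1 - q) * ee n i (i + 1) c
    else if m = j then
      q * ee n i (j + 1) c + (1 - q) * ee n i j c - q * (1 - q) * ee n j (j + 1) c
    else if m + 1 = i then ee n (i - 1) j c
    else if m + 1 = j then ee n i (j - 1) c
    else ee n i j c

/-- The field `ℚ(t,q)` of rational functions in two variables. -/
abbrev F2 := FractionRing (MvPolynomial (Fin 2) ℚ)

/-- The variable `t` in `ℚ(t,q)`. -/
def tt : F2 := algebraMap (MvPolynomial (Fin 2) ℚ) F2 (MvPolynomial.X 0)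

/-- The variable `q` in `ℚ(t,q)`. -/
def qq : F2 := algebraMap (MvPolynomial (Fin 2) ℚ) F2 (MvPolynomial.X 1)

/-!
Write `ρ` for the Lawrence–Krammer matrix of `σ_m` and `c = (tq + 1)(t - 1)`. The intertwiner is
`V = c W + (q - 1) E D Eᵀ`, where `W` and `D` are diagonal and the row `(i, j)` of `E` is
`t e_i - e_j`. Since `ρ E = E B - c U` for a matrix unit `U`,
`ρ V = c (ρ W - (q - 1) U D Eᵀ) + (q - 1) E (B D) Eᵀ`,
and both `ρ W - (q - 1) U D Eᵀ` and `B D` are symmetric. Hence `ρ V = V ρᵀ`, which propagates to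
`K(β^rev) V = V K(β)ᵀ`.

Over an arbitrary ring `det V` may be a zero divisor. So the identity is lifted to the
localization of `ℤ[t, q]` at the polynomials whose values in the ring are units: there `det V` is
regular, being nonzero at `(t, q) = (2, 1)`, and cancels from the characteristic polynomials.
-/

lemma closure_range_σg (n : ℕ) : Subgroup.closure (Set.range (σg (n := n))) = ⊤ :=
  PresentedGroup.closure_range_of _

section Charpoly

variable {R ι : Type*} [CommRing R] [Fintype ι] [DecidableEq ι]

lemma charpoly_eq_of_semiconjBy {V A B : Matrix ι ι R} (hV : V.det ∈ nonZeroDivisors R)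
    (h : SemiconjBy V A B) : A.charpoly = B.charpoly := by
  have hchar : V.map Polynomial.C * charmatrix A = charmatrix B * V.map Polynomial.C := by
    simp only [charmatrix, RingHom.mapMatrix_apply, Matrix.mul_sub, Matrix.sub_mul,
      ← Matrix.map_mul, h.eq, (scalar_commute Polynomial.X (Commute.all _) (V.map Polynomial.C)).eq]
  have hdet : Polynomial.C V.det * A.charpoly = Polynomial.C V.det * B.charpoly := by
    have := congrArg det hchar
    rwa [det_mul, det_mul, mul_comm (charmatrix B).det, ← RingHom.mapMatrix_apply,
      ← RingHom.map_det] at this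
  ext k
  rw [← mul_cancel_left_mem_nonZeroDivisors hV, ← Polynomial.coeff_C_mul, hdet,
    Polynomial.coeff_C_mul]

end Charpoly

section LocalHom

variable {A R : Type*} [CommRing A] [CommRing R]

lemma isLocalHom_of_isLocalization {L : Type*} [CommRing L] [Algebra A L] (M : Submonoid A)
    [IsLocalization M L] (g : L →+* R) (hg : ∀ a, IsUnit (g (algebraMap A L a)) → a ∈ M) :
    IsLocalHom g where
  map_nonunit x hx := by
    obtain ⟨⟨a, s⟩, hxs⟩ := IsLocalization.surj M x
    have hga : IsUnit (g (algebraMap A L a)) := by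
      rw [← hxs, map_mul]
      exact hx.mul ((IsLocalization.map_units L s).map g)
    exact isUnit_of_mul_isUnit_left (hxs ▸ IsLocalization.map_units L ⟨a, hg a hga⟩)

lemma isUnit_matrix_of_isUnit_map {ι : Type*} [Fintype ι] [DecidableEq ι] (f : A →+* R)
    [IsLocalHom f] {M : Matrix ι ι A} (hM : IsUnit (M.map f)) : IsUnit M := by
  rw [isUnit_iff_isUnit_det] at hM ⊢
  rwa [← RingHom.mapMatrix_apply, ← RingHom.map_det, isUnit_map_iff] at hM

end LocalHom

section ReversalForm

variable {R : Type*} [CommRing R]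

/-- The matrix `E` whose row `(i, j)` is the vertex vector `t e_i - e_j`. -/
def lkEdge (t : R) (n : ℕ) : Matrix (BP n) (Fin (n + 1)) R :=
  of fun r a => t * (if r.val.1 = a then 1 else 0) - (if r.val.2 = a then 1 else 0)

/-- The diagonal weight `W` on pairs induced by a weight `w` on vertices. -/
def pairWeight (w : ℕ → R) (n : ℕ) : Matrix (BP n) (BP n) R :=
  diagonal fun r => w r.val.1 * w r.val.2

/-- The diagonal weight `D` on vertices; it is the square of `w`, so as to have the same degree
in `w` as `pairWeight`. -/
def vertexWeight (w : ℕ → R) (n : ℕ) : Matrix (Fin (n + 1)) (Fin (n + 1)) R :=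
  diagonal fun a => w a ^ 2

/-- The matrix `V` intertwining the Lawrence–Krammer matrices of the Artin generators with their
transposes. The exponent `n - a` never truncates, since the vertices are at most `n`. -/
def lkForm (t q : R) (n : ℕ) : Matrix (BP n) (BP n) R :=
  ((t * q + 1) * (t - 1)) • pairWeight (fun a => q ^ (n - a)) n +
    (q - 1) • (lkEdge t n * vertexWeight (fun a => q ^ (n - a)) n * (lkEdge t n)ᵀ)

/-- The matrix `B` through which `σ_m` acts on the vertex vectors `lkEdge`, up to a multiple of
`edgeUnit`. -/
def vertexGen (t q : R) (n m : ℕ) : Matrix (Fin (n + 1)) (Fin (n + 1)) R :=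
  of fun a b =>
    if (a : ℕ) = m then
      (if (b : ℕ) = m then (1 - q) * (1 + t * q) else if (b : ℕ) = m + 1 then q ^ 2 else 0)
    else if (a : ℕ) = m + 1 then (if (b : ℕ) = m then 1 else 0)
    else if a = b then 1 else 0

variable (R) in
/-- The matrix unit `U` with row `(m, m + 1)` and column `m`: it corrects the action of `σ_m` on
vertex vectors. -/
def edgeUnit (n m : ℕ) : Matrix (BP n) (Fin (n + 1)) R :=
  of fun r a =>
    if (r.val.1 : ℕ) = m ∧ (r.val.2 : ℕ) = m + 1 ∧ (a : ℕ) = m then 1 else 0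

lemma sum_ee_mul {n a b : ℕ} (ha : 0 < a) (hab : a < b) (hb : b ≤ n) (f : ℕ → ℕ → R) :
    ∑ c : BP n, ee n a b c * f c.val.1 c.val.2 = f a b := by
  rw [Finset.sum_eq_single ⟨(⟨a, by omega⟩, ⟨b, by omega⟩), ha, hab⟩]
  · simp [ee]
  · intro c _ hc
    have : ¬ ((c.val.1 : ℕ) = a ∧ (c.val.2 : ℕ) = b) := fun h =>
      hc (Subtype.ext (Prod.ext (Fin.ext h.1) (Fin.ext h.2)))
    simp [ee, this]
  · simp

lemma sum_LKgen_mul (t q : R) {n m : ℕ} (hm : 0 < m) (hmn : m < n) {i j : Fin (n + 1)}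
    (hij : 0 < (i : ℕ) ∧ (i : ℕ) < (j : ℕ)) (f : ℕ → ℕ → R) :
    ∑ c : BP n, LKgen t q n m ⟨(i, j), hij⟩ c * f c.val.1 c.val.2 =
      if m = i ∧ (j : ℕ) = i + 1 then -(t * q ^ 2) * f i j
      else if m = i then q * f (i + 1) j + (1 - q) * f i j + t * q * (1 - q) * f i (i + 1)
      else if m = j then q * f i (j + 1) + (1 - q) * f i j - q * (1 - q) * f j (j + 1)
      else if m + 1 = i then f (i - 1) j
      else if m + 1 = j then f i (j - 1)
      else f i j := by
  have := j.isLt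
  simp only [LKgen]
  split_ifs <;>
    simp (disch := omega) only [add_mul, sub_mul _ _ (f _ _), mul_assoc, Finset.sum_add_distrib,
      Finset.sum_sub_distrib, ← Finset.mul_sum, sum_ee_mul]

lemma LKgen_mul_lkEdge (t q : R) {n m : ℕ} (hm : 0 < m) (hmn : m < n) :
    LKgen t q n m * lkEdge t n =
      lkEdge t n * vertexGen t q n m - ((t * q + 1) * (t - 1)) • edgeUnit R n m := by
  ext ⟨⟨⟨i, hi⟩, ⟨j, hj⟩⟩, h0, hij⟩ ⟨a, ha⟩
  have hleft := sum_LKgen_mul t q hm hmn ⟨h0, hij⟩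
    fun x y => t * (if x = a then 1 else 0) - (if y = a then 1 else 0)
  have hright : (lkEdge t n * vertexGen t q n m) ⟨(⟨i, hi⟩, ⟨j, hj⟩), h0, hij⟩ ⟨a, ha⟩ =
      t * vertexGen t q n m ⟨i, hi⟩ ⟨a, ha⟩ - vertexGen t q n m ⟨j, hj⟩ ⟨a, ha⟩ := by
    simp [mul_apply, lkEdge, sub_mul, Finset.sum_sub_distrib]
  rw [Matrix.sub_apply, hright, mul_apply]
  simp only [lkEdge, vertexGen, edgeUnit, of_apply, Matrix.smul_apply, smul_eq_mul, Fin.ext_iff]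
    at h0 hij hleft ⊢
  rw [hleft]
  clear hleft hright
  by_cases hmi : m = i
  · by_cases hji : j = i + 1 <;> grind
  by_cases hmj : m = j
  · grind
  by_cases hmi' : m + 1 = i
  · grind
  by_cases hmj' : m + 1 = j <;> grind

lemma isSymm_vertexGen_mul_vertexWeight (t q : R) (n : ℕ) {m : ℕ} {w : ℕ → R}
    (hw : w m = q * w (m + 1)) : (vertexGen t q n m * vertexWeight w n).IsSymm := by
  ext a b
  simp only [vertexWeight, transpose_apply, mul_diagonal, vertexGen, of_apply]
  grind

lemma edgeUnit_mul_vertexWeight_mul_lkEdge_transpose_apply (t : R) (w : ℕ → R) {n m : ℕ}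
    (hmn : m < n) (r c : BP n) :
    (edgeUnit R n m * vertexWeight w n * (lkEdge t n)ᵀ) r c =
      if (r.val.1 : ℕ) = m ∧ (r.val.2 : ℕ) = m + 1 then
        w m ^ 2 * (t * (if (c.val.1 : ℕ) = m then 1 else 0) - (if (c.val.2 : ℕ) = m then 1 else 0))
      else 0 := by
  rw [mul_apply, Finset.sum_eq_single ⟨m, by omega⟩]
  · simp [vertexWeight, edgeUnit, lkEdge, Fin.ext_iff]
  · intro b _ hb
    have : (b : ℕ) ≠ m := fun h => hb (Fin.ext h)
    simp [vertexWeight, edgeUnit, this]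
  · simp

lemma isSymm_LKgen_mul_pairWeight_sub (t q : R) {n m : ℕ} (hmn : m < n) {w : ℕ → R}
    (hw : w m = q * w (m + 1)) :
    (LKgen t q n m * pairWeight w n -
      (q - 1) • (edgeUnit R n m * vertexWeight w n * (lkEdge t n)ᵀ)).IsSymm := by
  ext ⟨⟨⟨i, hi⟩, ⟨j, hj⟩⟩, h0, hij⟩ ⟨⟨⟨i', hi'⟩, ⟨j', hj'⟩⟩, h0', hij'⟩
  simp only [transpose_apply, Matrix.sub_apply, Matrix.smul_apply, smul_eq_mul, pairWeight,
    edgeUnit_mul_vertexWeight_mul_lkEdge_transpose_apply t w hmn, mul_diagonal, LKgen, ee]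
  dsimp only at h0 hij h0' hij'
  by_cases hmi : m = i
  · by_cases hji : j = i + 1 <;> grind
  by_cases hmj : m = j
  · grind
  by_cases hmi' : m + 1 = i
  · grind
  by_cases hmj' : m + 1 = j <;> grind

lemma isSymm_lkForm (t q : R) (n : ℕ) : (lkForm t q n).IsSymm := by
  simp [lkForm, IsSymm, pairWeight, vertexWeight, Matrix.mul_assoc]

lemma lkForm_one (t : R) (n : ℕ) :
    lkForm t 1 n = ((t + 1) * (t - 1)) • (1 : Matrix (BP n) (BP n) R) := by
  simp [lkForm, pairWeight]

lemma isSymm_LKgen_mul_lkForm (t q : R) {n m : ℕ} (hm : 0 < m) (hmn : m < n) :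
    (LKgen t q n m * lkForm t q n).IsSymm := by
  set w : ℕ → R := fun a => q ^ (n - a)
  have hw : w m = q * w (m + 1) := by
    simp only [w, ← pow_succ']
    congr 1
    omega
  have hdecomp : LKgen t q n m * lkForm t q n =
      ((t * q + 1) * (t - 1)) • (LKgen t q n m * pairWeight w n -
        (q - 1) • (edgeUnit R n m * vertexWeight w n * (lkEdge t n)ᵀ)) +
      (q - 1) • (lkEdge t n * (vertexGen t q n m * vertexWeight w n) * (lkEdge t n)ᵀ) := by
    simp only [lkForm, Matrix.mul_add, Matrix.mul_smul, ← Matrix.mul_assoc,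
      LKgen_mul_lkEdge t q hm hmn, Matrix.sub_mul, Matrix.smul_mul, smul_sub, smul_smul]
    rw [mul_comm (q - 1)]
    abel
  have hvertex : (lkEdge t n * (vertexGen t q n m * vertexWeight w n) * (lkEdge t n)ᵀ).IsSymm := by
    rw [IsSymm, transpose_mul, transpose_mul, transpose_transpose,
      (isSymm_vertexGen_mul_vertexWeight t q n hw).eq, ← Matrix.mul_assoc]
  rw [hdecomp]
  exact ((isSymm_LKgen_mul_pairWeight_sub t q hmn hw).smul _).add (hvertex.smul _)

lemma semiconjBy_lkForm_LKgen (t q : R) {n m : ℕ} (hm : 0 < m) (hmn : m < n) :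
    SemiconjBy (lkForm t q n) (LKgen t q n m)ᵀ (LKgen t q n m) := by
  rw [SemiconjBy, ← (isSymm_LKgen_mul_lkForm t q hm hmn).eq, transpose_mul,
    (isSymm_lkForm t q n).eq]

end ReversalForm

section Specialization

variable {A R : Type*} [CommRing A] [CommRing R]

lemma map_LKgen (f : A →+* R) (t q : A) (n m : ℕ) :
    (LKgen t q n m).map f = LKgen (f t) (f q) n m := by
  ext r c
  simp only [map_apply, LKgen, ee]
  split_ifs <;> simp

lemma map_lkForm (f : A →+* R) (t q : A) (n : ℕ) :
    (lkForm t q n).map f = lkForm (f t) (f q) n := by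
  ext r c
  simp [lkForm, lkEdge, pairWeight, vertexWeight, mul_apply, diagonal_apply, apply_ite f]

lemma map_det_lkForm (f : A →+* R) (t q : A) (n : ℕ) :
    f (lkForm t q n).det = (lkForm (f t) (f q) n).det := by
  rw [RingHom.map_det, RingHom.mapMatrix_apply, map_lkForm]

lemma det_lkForm_X_ne_zero (n : ℕ) :
    (lkForm (MvPolynomial.X 0 : MvPolynomial (Fin 2) ℤ) (MvPolynomial.X 1) n).det ≠ 0 := by
  intro h
  have heval : (lkForm (2 : ℤ) 1 n).det = 0 := by
    simpa [map_det_lkForm] using congrArg (MvPolynomial.eval ![2, 1]) h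
  rw [lkForm_one, det_smul, det_one] at heval
  norm_num at heval

lemma exists_semiconjBy_lkForm_lift (f : A →+* R) [IsLocalHom f] (t q : A) {n : ℕ}
    {K : Braid n →* GL (BP n) R}
    (hK : ∀ m : Fin (n - 1), (K (σg m)).val = LKgen (f t) (f q) n ((m : ℕ) + 1))
    {rev : Braid n →* (Braid n)ᵐᵒᵖ}
    (hrev : ∀ i : Fin (n - 1), rev (σg i) = MulOpposite.op (σg i)) (β : Braid n) :
    ∃ P Q : GL (BP n) A, (GeneralLinearGroup.map f P).val = (K β).valᵀ ∧
      GeneralLinearGroup.map f Q = K (rev β).unop ∧ SemiconjBy (lkForm t q n) P.val Q.val := by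
  have hβ : β ∈ Subgroup.closure (Set.range σg) := closure_range_σg n ▸ Subgroup.mem_top β
  induction hβ using Subgroup.closure_induction with
  | mem _ hx =>
    obtain ⟨m, rfl⟩ := hx
    have hmap : (LKgen t q n (m + 1)).map f = K (σg m) := by rw [map_LKgen, hK]
    have hunit : IsUnit (LKgen t q n (m + 1)) :=
      isUnit_matrix_of_isUnit_map f (hmap ▸ (K (σg m)).isUnit)
    obtain ⟨P, hP⟩ := (isUnit_transpose _).mpr hunit
    obtain ⟨Q, hQ⟩ := hunit
    refine ⟨P, Q, ?_, Units.ext ?_, ?_⟩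
    · change P.val.map f = _
      rw [hP, transpose_map, hmap]
    · change Q.val.map f = _
      rw [hQ, hmap, hrev, MulOpposite.unop_op]
    · rw [hP, hQ]
      exact semiconjBy_lkForm_LKgen t q (by omega) (by omega)
  | one => exact ⟨1, 1, by simp, by simp, .one_right _⟩
  | mul x y _ _ ihx ihy =>
    obtain ⟨P, Q, hP, hQ, h⟩ := ihx
    obtain ⟨P', Q', hP', hQ', h'⟩ := ihy
    exact ⟨P' * P, Q' * Q, by simp [hP, hP'], by simp [hQ, hQ'],
      h'.mul_right h⟩
  | inv x _ ih =>
    obtain ⟨P, Q, hP, hQ, h⟩ := ih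
    exact ⟨P⁻¹, Q⁻¹, by simp [hP, transpose_nonsing_inv], by simp [hQ], h.units_inv_right⟩

lemma charpoly_eq_charpoly_rev_of_isLocalHom (f : A →+* R) [IsLocalHom f] (t q : A) {n : ℕ}
    (hV : (lkForm t q n).det ∈ nonZeroDivisors A) {K : Braid n →* GL (BP n) R}
    (hK : ∀ m : Fin (n - 1), (K (σg m)).val = LKgen (f t) (f q) n ((m : ℕ) + 1))
    {rev : Braid n →* (Braid n)ᵐᵒᵖ}
    (hrev : ∀ i : Fin (n - 1), rev (σg i) = MulOpposite.op (σg i)) (β : Braid n) :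
    (K β).val.charpoly = (K (rev β).unop).val.charpoly := by
  obtain ⟨P, Q, hP, hQ, hPQ⟩ := exists_semiconjBy_lkForm_lift f t q hK hrev β
  calc (K β).val.charpoly
    _ = (P.val.map f).charpoly := by rw [← charpoly_transpose, ← hP]; rfl
    _ = P.val.charpoly.map f := charpoly_map _ f
    _ = Q.val.charpoly.map f := by rw [charpoly_eq_of_semiconjBy hV hPQ]
    _ = (Q.val.map f).charpoly := (charpoly_map _ f).symm
    _ = (K (rev β).unop).val.charpoly := by rw [← hQ]; rfl

end Specialization

theorem lk_reverse_charpoly_general {R : Type*} [CommRing R] (t q : R) (n : ℕ)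
    (K : Braid n →* GL (BP n) R)
    (hK : ∀ m : Fin (n - 1),
      (K (σg m) : Matrix (BP n) (BP n) R) = LKgen t q n ((m : ℕ) + 1))
    (rev : Braid n →* (Braid n)ᵐᵒᵖ)
    (hrev : ∀ i : Fin (n - 1), rev (σg i) = MulOpposite.op (σg i))
    (β : Braid n) :
    (K β : Matrix (BP n) (BP n) R).charpoly =
      (K (rev β).unop : Matrix (BP n) (BP n) R).charpoly := by
  let f : MvPolynomial (Fin 2) ℤ →+* R := MvPolynomial.eval₂Hom (Int.castRingHom R) ![t, q]
  let S := (IsUnit.submonoid R).comap f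
  let ι := algebraMap (MvPolynomial (Fin 2) ℤ) (Localization S)
  let g : Localization S →+* R := IsLocalization.lift (M := S) (g := f) fun s => s.2
  have hg (a : MvPolynomial (Fin 2) ℤ) : g (ι a) = f a := IsLocalization.lift_eq _ a
  have : IsLocalHom g := isLocalHom_of_isLocalization S g fun a ha => by rwa [hg] at ha
  have ht : g (ι (MvPolynomial.X 0)) = t := by simp [hg, f]
  have hq : g (ι (MvPolynomial.X 1)) = q := by simp [hg, f]
  refine charpoly_eq_charpoly_rev_of_isLocalHom g (ι (MvPolynomial.X 0)) (ι (MvPolynomial.X 1))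
    ?_ (by rwa [ht, hq]) hrev β
  rw [← map_det_lkForm]
  exact IsLocalization.map_nonZeroDivisors_le S _
    ⟨_, mem_nonZeroDivisors_of_ne_zero (det_lkForm_X_ne_zero n), rfl⟩

/-- For every braid `β`, the Lawrence–Krammer matrices `K(β)` and
`K(β^rev)` have the same characteristic polynomial, where `β ↦ β^rev` is the
anti-automorphism fixing each Artin generator. -/
theorem lk_reverse_charpoly (n : ℕ) (K : Braid n →* GL (BP n) F2)
    (hK : ∀ m : Fin (n - 1),
      (K (σg m) : Matrix (BP n) (BP n) F2) = LKgen tt qq n ((m : ℕ) + 1))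
    (rev : Braid n →* (Braid n)ᵐᵒᵖ)
    (hrev : ∀ i : Fin (n - 1), rev (σg i) = MulOpposite.op (σg i))
    (β : Braid n) :
    (K β : Matrix (BP n) (BP n) F2).charpoly =
      (K (rev β).unop : Matrix (BP n) (BP n) F2).charpoly :=
  lk_reverse_charpoly_general tt qq n K hK rev hrev β
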